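/- Let G be a finite group of order n and v₁, v₂, v₃ ∈ F₂G, where F₂ = ZMod 2. Let A be the 2n×2n block matrix with blocks σ(v₁), σ(v₂) in the first block row and σ(v₂), σ(v₃) in the second block row, and let C_σ ⊆ F₂^{4n} be the span of the rows of the 2n×4n matrix (I_{2n} | A). Then C_σ is a self-dual code of length 4n if and only if σ(v₁v₁* + v₂v₂*) = Iₙ, σ(v₁v₂* + v₂v₃*) = 0, σ(v₂v₁* + v₃v₂*) = 0, and σ(v₂v₂* + v₃v₃*) = Iₙ. -/

import Mathlib

open Matrix

/-- For `v = ∑ α_g g` in the group ring `RG`, `σ(v)` is the `G × G` matrix over `R` whose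
`(g, h)` entry is the coefficient `α_{g⁻¹h}`. -/
def sigma {R G : Type*} [CommRing R] [Group G] (v : MonoidAlgebra R G) : Matrix G G R :=
  Matrix.of fun g h => v.coeff (g⁻¹ * h)

/-- The canonical involution on a group ring: `v* = ∑ α_g g⁻¹` for `v = ∑ α_g g`. -/
def invol {R G : Type*} [CommRing R] [Group G] (v : MonoidAlgebra R G) : MonoidAlgebra R G :=
  MonoidAlgebra.ofCoeff (Finsupp.equivMapDomain (Equiv.inv G) v.coeff)

/-- The Euclidean dual of a set of vectors `C ⊆ Rⁿ`. -/
def dualCode {R : Type*} [CommRing R] {ι : Type*} [Fintype ι] (C : Set (ι → R)) :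
    Set (ι → R) :=
  {x | ∀ y ∈ C, ∑ i, x i * y i = 0}

/-!
A vector `x = (u, w)` is orthogonal to the rows of `(I | A)` exactly when `u = -A w`, and is a
combination of these rows exactly when `w = Aᵀ u`. Thus self-orthogonality of the code amounts to
`A Aᵀ = -I` and the reverse inclusion to `Aᵀ A = -I`; for square `A` these are equivalent. Since
`σ` is multiplicative and turns the involution into transposition, the blocks of `A Aᵀ` are the
images under `σ` of the group ring elements in the theorem.
-/

section RowCode

variable {R ι κ : Type*} [CommRing R]

/-- The linear code generated by a matrix `M`, that is, the span of the rows of `M`. -/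
def rowCode (M : Matrix ι κ R) : Submodule R (κ → R) :=
  Submodule.span R (Set.range M.row)

lemma mem_rowCode [Fintype ι] {M : Matrix ι κ R} {x : κ → R} :
    x ∈ rowCode M ↔ ∃ c, c ᵥ* M = x := by
  rw [rowCode, ← range_vecMulLinear]
  rfl

lemma mem_dualCode_rowCode [Fintype κ] {M : Matrix ι κ R} {x : κ → R} :
    x ∈ dualCode (rowCode M : Set (κ → R)) ↔ M *ᵥ x = 0 := by
  calc x ∈ dualCode (rowCode M : Set (κ → R))
      ↔ rowCode M ≤ LinearMap.ker (dotProductBilin R R x) := Iff.rfl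
    _ ↔ ∀ k, x ⬝ᵥ M k = 0 := by
        rw [rowCode, Submodule.span_le, Set.range_subset_iff]
        rfl
    _ ↔ M *ᵥ x = 0 := by
        simp only [dotProduct_comm x, funext_iff]
        rfl

lemma rowCode_subset_dualCode_iff [Fintype κ] {M : Matrix ι κ R} :
    (rowCode M : Set (κ → R)) ⊆ dualCode (rowCode M) ↔ M * Mᵀ = 0 := by
  calc (rowCode M : Set (κ → R)) ⊆ dualCode (rowCode M)
      ↔ rowCode M ≤ LinearMap.ker M.mulVecLin :=
        forall₂_congr fun _ _ => mem_dualCode_rowCode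
    _ ↔ ∀ l, M *ᵥ M l = 0 := by
        rw [rowCode, Submodule.span_le, Set.range_subset_iff]
        rfl
    _ ↔ M * Mᵀ = 0 := by
        simp only [← Matrix.ext_iff, funext_iff]
        exact forall_comm

end RowCode

section SystematicCode

variable {R ι κ : Type*} [CommRing R] [DecidableEq ι]

/-- The code with generator matrix `(I | A)` in standard form. Information symbols are indexed by
`ι` and check symbols by `κ`. -/
def systematicCode (A : Matrix ι κ R) : Submodule R (ι ⊕ κ → R) :=
  rowCode (fromCols 1 A)

lemma mem_systematicCode [Fintype ι] {A : Matrix ι κ R} {x : ι ⊕ κ → R} :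
    x ∈ systematicCode A ↔ x ∘ Sum.inr = (x ∘ Sum.inl) ᵥ* A := by
  simp only [systematicCode, mem_rowCode, vecMul_fromCols, vecMul_one]
  constructor
  · rintro ⟨u, rfl⟩
    rfl
  · intro hx
    exact ⟨x ∘ Sum.inl, by rw [← hx, Sum.elim_comp_inl_inr]⟩

variable [Fintype ι] [Fintype κ]

lemma mem_dualCode_systematicCode {A : Matrix ι κ R} {x : ι ⊕ κ → R} :
    x ∈ dualCode (systematicCode A : Set (ι ⊕ κ → R)) ↔
      x ∘ Sum.inl = -(A *ᵥ (x ∘ Sum.inr)) := by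
  rw [systematicCode, mem_dualCode_rowCode, fromCols_mulVec, one_mulVec, add_eq_zero_iff_eq_neg]

lemma systematicCode_subset_dualCode_iff {A : Matrix ι κ R} :
    (systematicCode A : Set (ι ⊕ κ → R)) ⊆ dualCode (systematicCode A) ↔ A * Aᵀ = -1 := by
  rw [systematicCode, rowCode_subset_dualCode_iff, transpose_fromCols, fromCols_mul_fromRows,
    transpose_one, mul_one, add_eq_zero_iff_neg_eq', neg_eq_iff_eq_neg]

lemma dualCode_subset_systematicCode_iff [DecidableEq κ] {A : Matrix ι κ R} :
    dualCode (systematicCode A : Set (ι ⊕ κ → R)) ⊆ systematicCode A ↔ Aᵀ * A = -1 := by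
  calc dualCode (systematicCode A : Set (ι ⊕ κ → R)) ⊆ systematicCode A
      ↔ ∀ w, -(A *ᵥ w) ᵥ* A = w := by
        simp only [Set.subset_def, SetLike.mem_coe, mem_dualCode_systematicCode,
          mem_systematicCode]
        constructor
        · intro hsub w
          exact (hsub (Sum.elim (-(A *ᵥ w)) w) rfl).symm
        · intro hfix x hx
          rw [hx, hfix]
    _ ↔ Aᵀ * A = -1 := by
        simp only [← mulVec_transpose, mulVec_neg, mulVec_mulVec, neg_eq_iff_eq_neg,
          ext_iff_mulVec, neg_mulVec, one_mulVec]

theorem systematicCode_selfDual_iff {A : Matrix ι ι R} :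
    (systematicCode A : Set (ι ⊕ ι → R)) = dualCode (systematicCode A) ↔ A * Aᵀ = -1 := by
  rw [Set.Subset.antisymm_iff, systematicCode_subset_dualCode_iff,
    dualCode_subset_systematicCode_iff, and_iff_left_iff_imp]
  intro hA
  have neg_mul_transpose : -A * Aᵀ = 1 := by rw [neg_mul, hA, neg_neg]
  rw [← neg_eq_iff_eq_neg, ← mul_neg]
  exact mul_eq_one_comm.1 neg_mul_transpose

end SystematicCode

section Sigma

variable {R G : Type*} [CommRing R] [Group G]

lemma sigma_add (v w : MonoidAlgebra R G) : sigma (v + w) = sigma v + sigma w := by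
  ext g h
  simp [sigma]

lemma sigma_mul [Fintype G] (v w : MonoidAlgebra R G) : sigma (v * w) = sigma v * sigma w := by
  ext g h
  calc (v * w).coeff (g⁻¹ * h)
      = ∑ a, v.coeff a * w.coeff (a⁻¹ * (g⁻¹ * h)) := by
        rw [MonoidAlgebra.coeff_mul_apply_left, Finsupp.sum_fintype _ _ fun _ => zero_mul _]
    _ = ∑ k, v.coeff (g⁻¹ * k) * w.coeff (k⁻¹ * h) :=
        (Fintype.sum_equiv (Equiv.mulLeft g⁻¹) _ _ fun k => by simp [mul_assoc]).symm

lemma sigma_invol (v : MonoidAlgebra R G) : sigma (invol v) = (sigma v)ᵀ := by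
  ext g h
  simp [sigma, invol, Finsupp.equivMapDomain_apply]

lemma fromBlocks_sigma_mul_transpose [Fintype G] (v₁ v₂ v₃ v₄ : MonoidAlgebra R G) :
    fromBlocks (sigma v₁) (sigma v₂) (sigma v₃) (sigma v₄) *
        (fromBlocks (sigma v₁) (sigma v₂) (sigma v₃) (sigma v₄))ᵀ =
      fromBlocks (sigma (v₁ * invol v₁ + v₂ * invol v₂)) (sigma (v₁ * invol v₃ + v₂ * invol v₄))
        (sigma (v₃ * invol v₁ + v₄ * invol v₂)) (sigma (v₃ * invol v₃ + v₄ * invol v₄)) := by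
  simp only [fromBlocks_transpose, fromBlocks_multiply, sigma_add, sigma_mul, sigma_invol]

end Sigma

theorem groupRing_construction_selfDual_iff_general {R G : Type*} [CommRing R] [Group G]
    [Fintype G] [DecidableEq G] {v₁ v₂ v₃ v₄ : MonoidAlgebra R G}
    {A : Matrix (G ⊕ G) (G ⊕ G) R}
    (hA : A = fromBlocks (sigma v₁) (sigma v₂) (sigma v₃) (sigma v₄)) :
    (systematicCode A : Set ((G ⊕ G) ⊕ (G ⊕ G) → R)) = dualCode (systematicCode A) ↔
      (sigma (v₁ * invol v₁ + v₂ * invol v₂) = -1 ∧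
       sigma (v₁ * invol v₃ + v₂ * invol v₄) = 0 ∧
       sigma (v₃ * invol v₁ + v₄ * invol v₂) = 0 ∧
       sigma (v₃ * invol v₃ + v₄ * invol v₄) = -1) := by
  rw [systematicCode_selfDual_iff, hA, fromBlocks_sigma_mul_transpose, ← fromBlocks_one,
    fromBlocks_neg, neg_zero, fromBlocks_inj]

/-- Let `G` be a finite group of order `n` and `v₁, v₂, v₃ ∈ F₂G`. Let
`A = [[σ(v₁), σ(v₂)], [σ(v₂), σ(v₃)]]` and let `C_σ ⊆ F₂^{4n}` be the span of the rows of
`(I_{2n} | A)`. Then `C_σ` is self-dual if and only if `σ(v₁v₁* + v₂v₂*) = Iₙ`,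
`σ(v₁v₂* + v₂v₃*) = 0`, `σ(v₂v₁* + v₃v₂*) = 0` and `σ(v₂v₂* + v₃v₃*) = Iₙ`. -/
theorem groupRing_construction_selfDual_iff {G : Type*} [Group G] [Fintype G] [DecidableEq G]
    (n : ℕ) (hn : Fintype.card G = n) (v₁ v₂ v₃ : MonoidAlgebra (ZMod 2) G)
    (A : Matrix (G ⊕ G) (G ⊕ G) (ZMod 2))
    (hA : A = Matrix.fromBlocks (sigma v₁) (sigma v₂) (sigma v₂) (sigma v₃))
    (C : Submodule (ZMod 2) (((G ⊕ G) ⊕ (G ⊕ G)) → ZMod 2))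
    (hC : C = Submodule.span (ZMod 2) (Set.range fun k : G ⊕ G =>
      (Sum.elim (fun j => if k = j then (1 : ZMod 2) else 0) (fun j => A k j) :
        ((G ⊕ G) ⊕ (G ⊕ G)) → ZMod 2))) :
    (C : Set (((G ⊕ G) ⊕ (G ⊕ G)) → ZMod 2)) =
        dualCode (C : Set (((G ⊕ G) ⊕ (G ⊕ G)) → ZMod 2)) ↔
      (sigma (v₁ * invol v₁ + v₂ * invol v₂) = 1 ∧
       sigma (v₁ * invol v₂ + v₂ * invol v₃) = 0 ∧
       sigma (v₂ * invol v₁ + v₃ * invol v₂) = 0 ∧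
       sigma (v₂ * invol v₂ + v₃ * invol v₃) = 1) := by
  obtain rfl : C = systematicCode A := hC
  simpa only [ZModModule.neg_eq_self] using groupRing_construction_selfDual_iff_general hA
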